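/- arXiv:2601.22728 — 2 statements merged into one kernel-verified Lean document; each statement's English description precedes it below -/
import Mathlib

section
/- There is an absolute constant c > 0 with the following property. Let (X, dist) be a metric space, let P ⊆ X be a finite subset with |P| = n ≥ 2, and let ε ∈ (0, 1/2). Then there exists a pair decomposition W of P with at most c · (n/ε) · log n pairs such that every pair {A,B} ∈ W is both ε-stable and (1/ε)-semi-separated (i.e., W is simultaneously a (1/ε)-ABC and a (1/ε)-SSPD of P). -/
/-!
Fix scales `d k = m * (1 + ε) ^ k`, starting at a lower bound `m` for the positive distances in `P`.
At scale `k` join two points of `P` when their distance is at most `t k = ε * d k / (4 * n)`. A path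
has fewer than `n` edges, so a connected component `A` has diameter at most `ε * d k / 4`. Pair `A`
with the set `B` of all points at distance in `[d k, d (k + 1))` from some point of `A`. All distances
between `A` and `B` lie between `(1 - ε / 4) * d k` and `(1 + 5 * ε / 4) * d k`, so the pair is
`ε`-stable and `(1/ε)`-semi-separated. These pairs cover everything, because `x`, `y` are covered at
the scale of `dist x y` by the component of `x`.

The count uses only pairs with `B` nonempty. If `d (k + 1) ≤ t (k + K)`, then such a component `A` is
merged with another one by scale `k + K`. Hence at most `2 * (c k - c (k + K))` components are used at
scale `k`, where `c k` is the number of components (`card_merged_add_le`), and the sum over `k`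
telescopes to at most `2 * K * n` (`sum_add_le_of_step`). One can take `K = O(log (n / ε) / ε)`
(`exists_scale_shift`), which is `O(log n / ε)` when `ε ≥ 1 / n`. When `ε < 1 / n`, the at most `n ^ 2`
pairs of singletons are already few enough.
-/

/-- `dmin A B` is the minimum distance between the nonempty finite sets `A` and `B`. -/
noncomputable def dmin {X : Type*} [MetricSpace X] (A B : Finset X) : ℝ :=
  sInf {r : ℝ | ∃ a ∈ A, ∃ b ∈ B, r = dist a b}

/-- `dmax A B` is the maximum distance between the nonempty finite sets `A` and `B`. -/
noncomputable def dmax {X : Type*} [MetricSpace X] (A B : Finset X) : ℝ :=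
  sSup {r : ℝ | ∃ a ∈ A, ∃ b ∈ B, r = dist a b}

/-- The diameter of a nonempty finite set. -/
noncomputable def fdiam {X : Type*} [MetricSpace X] (A : Finset X) : ℝ :=
  sSup {r : ℝ | ∃ x ∈ A, ∃ y ∈ A, r = dist x y}

/-- `W` is a pair decomposition of the finite set `P`. -/
def PairDecomp {X : Type*} (P : Finset X) (W : Finset (Finset X × Finset X)) : Prop :=
  (∀ pr ∈ W, pr.1 ⊆ P ∧ pr.2 ⊆ P ∧ pr.1.Nonempty ∧ pr.2.Nonempty ∧ Disjoint pr.1 pr.2) ∧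
  ∀ x ∈ P, ∀ y ∈ P, x ≠ y →
    ∃ pr ∈ W, (x ∈ pr.1 ∧ y ∈ pr.2) ∨ (x ∈ pr.2 ∧ y ∈ pr.1)

/-- A pair `{A, B}` is `ε`-stable if `dmax(A,B) ≤ (1+2ε)·d(A,B)`. -/
def IsStable {X : Type*} [MetricSpace X] (ε : ℝ) (A B : Finset X) : Prop :=
  dmax A B ≤ (1 + 2 * ε) * dmin A B

/-- A pair `{A, B}` is `(1/ε)`-semi-separated if `min(diam A, diam B) ≤ ε·d(A,B)`. -/
def IsSemiSeparated {X : Type*} [MetricSpace X] (ε : ℝ) (A B : Finset X) : Prop :=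
  min (fdiam A) (fdiam B) ≤ ε * dmin A B

/-! ### Distances between finite sets -/

section Distances

variable {X : Type*} [MetricSpace X] {A B : Finset X}

lemma le_dmin {l : ℝ} (hA : A.Nonempty) (hB : B.Nonempty)
    (h : ∀ a ∈ A, ∀ b ∈ B, l ≤ dist a b) : l ≤ dmin A B := by
  obtain ⟨a, ha⟩ := hA
  obtain ⟨b, hb⟩ := hB
  refine le_csInf ⟨_, a, ha, b, hb, rfl⟩ ?_
  rintro r ⟨a, ha, b, hb, rfl⟩
  exact h a ha b hb

lemma dmax_le {u : ℝ} (hA : A.Nonempty) (hB : B.Nonempty)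
    (h : ∀ a ∈ A, ∀ b ∈ B, dist a b ≤ u) : dmax A B ≤ u := by
  obtain ⟨a, ha⟩ := hA
  obtain ⟨b, hb⟩ := hB
  refine csSup_le ⟨_, a, ha, b, hb, rfl⟩ ?_
  rintro r ⟨a, ha, b, hb, rfl⟩
  exact h a ha b hb

lemma fdiam_le {u : ℝ} (hA : A.Nonempty)
    (h : ∀ a ∈ A, ∀ b ∈ A, dist a b ≤ u) : fdiam A ≤ u := by
  obtain ⟨a, ha⟩ := hA
  refine csSup_le ⟨_, a, ha, a, ha, rfl⟩ ?_
  rintro r ⟨a, ha, b, hb, rfl⟩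
  exact h a ha b hb

/-- Every point of `B` only has to be near the range `[D, (1 + ε) * D)` from one point of `A`; the
diameter bound on `A` controls its distance to the other points of `A`. -/
lemma stable_and_semiSeparated {ε D : ℝ} (hε : 0 < ε) (hε' : ε < 1 / 2) (hD : 0 < D)
    (hA : A.Nonempty) (hB : B.Nonempty)
    (hdiam : ∀ a ∈ A, ∀ b ∈ A, dist a b ≤ ε * D / 4)
    (hring : ∀ b ∈ B, ∃ a ∈ A, D ≤ dist a b ∧ dist a b < (1 + ε) * D) :
    IsStable ε A B ∧ IsSemiSeparated ε A B := by
  have hl : (1 - ε / 4) * D ≤ dmin A B := by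
    refine le_dmin hA hB fun a ha b hb => ?_
    obtain ⟨a', ha', h1, -⟩ := hring b hb
    have h2 := hdiam a' ha' a ha
    have h3 := dist_triangle a' a b
    linarith
  have hu : dmax A B ≤ (1 + 5 * ε / 4) * D := by
    refine dmax_le hA hB fun a ha b hb => ?_
    obtain ⟨a', ha', -, h1⟩ := hring b hb
    have h2 := hdiam a ha a' ha'
    have h3 := dist_triangle a a' b
    linarith
  have hd : fdiam A ≤ ε * D / 4 := fdiam_le hA hdiam
  have hεD : 0 < ε * D := mul_pos hε hD
  have hεεD : ε * (ε * D) ≤ 1 / 2 * (ε * D) := by gcongr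
  constructor
  · refine hu.trans (le_trans ?_ (mul_le_mul_of_nonneg_left hl (by linarith)))
    nlinarith
  · refine (min_le_left _ _).trans (hd.trans (le_trans ?_ (mul_le_mul_of_nonneg_left hl hε.le)))
    nlinarith

lemma stable_and_semiSeparated_singleton {ε : ℝ} (hε : 0 < ε) (x y : X) :
    IsStable ε {x} {y} ∧ IsSemiSeparated ε {x} {y} := by
  have hl : dist x y ≤ dmin {x} {y} := le_dmin (by simp) (by simp) (by simp)
  have hu : dmax {x} {y} ≤ dist x y := dmax_le (by simp) (by simp) (by simp)
  have hd : fdiam ({x} : Finset X) ≤ 0 := fdiam_le (by simp) (by simp)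
  have h0 : 0 ≤ dist x y := dist_nonneg
  constructor
  · unfold IsStable
    nlinarith
  · exact (min_le_left _ _).trans (hd.trans (mul_nonneg hε.le (h0.trans hl)))

end Distances

/-! ### Counting merged components -/

/-- In a fibre of size one nothing is merged; a fibre of size `s ≥ 2` contributes `s ≤ 2 * (s - 1)`
merged elements. -/
lemma card_merged_add_le {α β : Type*} [Fintype α] [Fintype β] (f : α → β)
    (hf : Function.Surjective f) (S : Finset α) (hS : ∀ a ∈ S, ∃ a', a' ≠ a ∧ f a' = f a) :
    S.card + 2 * Fintype.card β ≤ 2 * Fintype.card α := by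
  classical
  have h1 : S.card = ∑ b : β, (S.filter (fun a => f a = b)).card :=
    Finset.card_eq_sum_card_fiberwise (fun _ _ => by simp)
  have h2 : Fintype.card α = ∑ b : β, (Finset.univ.filter (fun a => f a = b)).card :=
    Finset.card_eq_sum_card_fiberwise (s := Finset.univ) (fun _ _ => by simp)
  have h3 : 2 * Fintype.card β = ∑ _b : β, 2 := by simp [mul_comm]
  rw [h1, h2, h3, ← Finset.sum_add_distrib, Finset.mul_sum]
  refine Finset.sum_le_sum fun b _ => ?_
  obtain ⟨a₀, ha₀⟩ := hf b
  have hpos : 0 < (Finset.univ.filter (fun a => f a = b)).card :=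
    Finset.card_pos.2 ⟨a₀, by simpa using ha₀⟩
  have hle : (S.filter (fun a => f a = b)).card ≤ (Finset.univ.filter (fun a => f a = b)).card :=
    Finset.card_le_card (Finset.filter_subset_filter _ (Finset.subset_univ _))
  rcases Finset.eq_empty_or_nonempty (S.filter (fun a => f a = b)) with he | ⟨a, ha⟩
  · rw [he, Finset.card_empty]
    omega
  · rw [Finset.mem_filter] at ha
    obtain ⟨a', hne, ha'⟩ := hS a ha.1
    have : 1 < (Finset.univ.filter (fun a => f a = b)).card :=
      Finset.one_lt_card.2 ⟨a', by simp [ha', ha.2], a, by simp [ha.2], hne⟩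
    omega

lemma sum_add_le_of_step (a c : ℕ → ℕ) (K : ℕ) (h : ∀ k, a k + 2 * c (k + K) ≤ 2 * c k) (N : ℕ) :
    ∑ k ∈ Finset.range N, a k + 2 * ∑ i ∈ Finset.range K, c (i + N)
      ≤ 2 * ∑ i ∈ Finset.range K, c i := by
  induction N with
  | zero => simp
  | succ N ih =>
    have e1 := Finset.sum_range_succ (fun i => c (i + N)) K
    have e2 := Finset.sum_range_succ' (fun i => c (i + N)) K
    have e3 : ∀ i, i + 1 + N = i + (N + 1) := fun i => by omega
    simp only [e3, zero_add] at e2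
    have h4 := h N
    rw [add_comm N K] at h4
    rw [Finset.sum_range_succ]
    omega

/-! ### Threshold graphs -/

section Threshold

variable {V : Type*} [MetricSpace V]

/-- The graph joining distinct points at distance at most `t`; its connected components are the
single-linkage clusters at scale `t`. -/
def thresholdGraph (V : Type*) [MetricSpace V] (t : ℝ) : SimpleGraph V where
  Adj a b := a ≠ b ∧ dist a b ≤ t
  symm := ⟨fun a b h => ⟨h.1.symm, by rw [dist_comm]; exact h.2⟩⟩
  loopless := ⟨fun a h => h.1 rfl⟩

lemma thresholdGraph_mono {s t : ℝ} (h : s ≤ t) : thresholdGraph V s ≤ thresholdGraph V t :=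
  fun _ _ hab => ⟨hab.1, hab.2.trans h⟩

lemma dist_le_length_mul {t : ℝ} {u v : V} (p : (thresholdGraph V t).Walk u v) :
    dist u v ≤ p.length * t := by
  induction p with
  | nil => simp
  | @cons u v w h p ih =>
    have h1 := dist_triangle u v w
    have h2 : dist u v ≤ t := h.2
    rw [SimpleGraph.Walk.length_cons]
    push_cast
    linarith

lemma dist_le_of_reachable [Fintype V] {t : ℝ} (ht : 0 ≤ t) {u v : V}
    (h : (thresholdGraph V t).Reachable u v) : dist u v ≤ Fintype.card V * t := by
  obtain ⟨p, hp⟩ := h.exists_isPath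
  refine (dist_le_length_mul p).trans ?_
  have := hp.length_lt.le
  gcongr

end Threshold

/-! ### The decomposition -/

/-- The points of `P` lying in the component `C`. -/
noncomputable def clusterSet {X : Type*} [MetricSpace X] (P : Finset X) (t : ℝ)
    (C : (thresholdGraph P t).ConnectedComponent) : Finset X :=
  open Classical in
  P.filter fun x => ∃ h : x ∈ P, (thresholdGraph P t).connectedComponentMk ⟨x, h⟩ = C

/-- The points of `P` at distance in `[D, (1 + ε) * D)` from some point of `A`. -/
noncomputable def ringSet {X : Type*} [MetricSpace X] (P : Finset X) (ε D : ℝ)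
    (A : Finset X) : Finset X :=
  open Classical in
  P.filter fun y => ∃ a ∈ A, D ≤ dist a y ∧ dist a y < (1 + ε) * D

section Decomposition

variable {X : Type*} [MetricSpace X] {P : Finset X}

lemma mem_clusterSet {t : ℝ} {C : (thresholdGraph P t).ConnectedComponent} {x : X} :
    x ∈ clusterSet P t C ↔ ∃ h : x ∈ P, (thresholdGraph P t).connectedComponentMk ⟨x, h⟩ = C := by
  classical
  simp only [clusterSet, Finset.mem_filter]
  exact ⟨fun h => h.2, fun h => ⟨h.1, h⟩⟩

lemma mem_ringSet {ε D : ℝ} {A : Finset X} {y : X} :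
    y ∈ ringSet P ε D A ↔ y ∈ P ∧ ∃ a ∈ A, D ≤ dist a y ∧ dist a y < (1 + ε) * D := by
  classical
  simp only [ringSet, Finset.mem_filter]

lemma clusterSet_nonempty {t : ℝ} (C : (thresholdGraph P t).ConnectedComponent) :
    (clusterSet P t C).Nonempty := by
  induction C using SimpleGraph.ConnectedComponent.ind with
  | h v => exact ⟨v, mem_clusterSet.2 ⟨v.2, rfl⟩⟩

lemma dist_le_of_mem_clusterSet {t : ℝ} (ht : 0 ≤ t) {C : (thresholdGraph P t).ConnectedComponent}
    {x y : X} (hx : x ∈ clusterSet P t C) (hy : y ∈ clusterSet P t C) :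
    dist x y ≤ P.card * t := by
  obtain ⟨hx, rfl⟩ := mem_clusterSet.1 hx
  obtain ⟨hy, h⟩ := mem_clusterSet.1 hy
  have := dist_le_of_reachable ht (SimpleGraph.ConnectedComponent.exact h.symm)
  rwa [Fintype.card_coe] at this

/-- A component with a nonempty ring is joined to another component once the threshold reaches the
outer radius of the ring. -/
lemma exists_ne_map_eq {s t ε D : ℝ} (hst : s ≤ t) (hD : (1 + ε) * D ≤ t)
    {C : (thresholdGraph P s).ConnectedComponent}
    (hdisj : Disjoint (clusterSet P s C) (ringSet P ε D (clusterSet P s C)))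
    (hne : (ringSet P ε D (clusterSet P s C)).Nonempty) :
    ∃ C', C' ≠ C ∧
      SimpleGraph.ConnectedComponent.map (SimpleGraph.Hom.ofLE (thresholdGraph_mono hst)) C' =
      SimpleGraph.ConnectedComponent.map (SimpleGraph.Hom.ofLE (thresholdGraph_mono hst)) C := by
  obtain ⟨y, hy⟩ := hne
  obtain ⟨hyP, a, ha, -, hlt⟩ := mem_ringSet.1 hy
  have hyA : y ∉ clusterSet P s C := fun h => Finset.disjoint_left.1 hdisj h hy
  have hay : a ≠ y := by
    rintro rfl
    exact hyA ha
  obtain ⟨haP, rfl⟩ := mem_clusterSet.1 ha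
  refine ⟨(thresholdGraph P s).connectedComponentMk ⟨y, hyP⟩,
    fun h => hyA (mem_clusterSet.2 ⟨hyP, h⟩), ?_⟩
  simp only [SimpleGraph.ConnectedComponent.map_mk, SimpleGraph.Hom.coe_ofLE, id]
  refine SimpleGraph.ConnectedComponent.sound (SimpleGraph.Adj.reachable ?_)
  refine ⟨fun h => hay (congrArg Subtype.val h).symm, ?_⟩
  rw [dist_comm]
  exact hlt.le.trans hD

/-- The decomposition has at most `2 * K * n` pairs, where `K` is the number of scales after which the
threshold exceeds the outer radius of the current ring. -/
lemma exists_decomposition {ε : ℝ} (hP : P.Nonempty) (hε : 0 < ε) (hε' : ε < 1 / 2) (K : ℕ)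
    (hK : (1 + ε) * (4 * P.card) ≤ ε * (1 + ε) ^ K) :
    ∃ W : Finset (Finset X × Finset X), PairDecomp P W ∧
      (∀ pr ∈ W, IsStable ε pr.1 pr.2 ∧ IsSemiSeparated ε pr.1 pr.2) ∧
      W.card ≤ 2 * (K * P.card) := by
  classical
  have hn : (0 : ℝ) < P.card := by exact_mod_cast hP.card_pos
  obtain ⟨m, hm, hmin⟩ : ∃ m : ℝ, 0 < m ∧ ∀ x ∈ P, ∀ y ∈ P, x ≠ y → m ≤ dist x y := by
    rcases P.offDiag.eq_empty_or_nonempty with he | hne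
    · refine ⟨1, one_pos, fun x hx y hy hxy => ?_⟩
      have : (x, y) ∈ P.offDiag := Finset.mem_offDiag.2 ⟨hx, hy, hxy⟩
      simp [he] at this
    · obtain ⟨p, hp, h⟩ := P.offDiag.exists_min_image (fun p => dist p.1 p.2) hne
      refine ⟨dist p.1 p.2, dist_pos.2 (Finset.mem_offDiag.1 hp).2.2, fun x hx y hy hxy => ?_⟩
      exact h (x, y) (Finset.mem_offDiag.2 ⟨hx, hy, hxy⟩)
  obtain ⟨M, hM⟩ : ∃ M : ℝ, ∀ x ∈ P, ∀ y ∈ P, dist x y ≤ M := by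
    obtain ⟨M, hM⟩ := ((P ×ˢ P).image (fun p => dist p.1 p.2)).bddAbove
    refine ⟨M, fun x hx y hy => hM ?_⟩
    simp only [Finset.coe_image, Set.mem_image]
    exact ⟨(x, y), by simp [hx, hy], rfl⟩
  have h1ε : 1 < 1 + ε := by linarith
  obtain ⟨N, hN⟩ := pow_unbounded_of_one_lt (M / m) h1ε
  let d : ℕ → ℝ := fun k => m * (1 + ε) ^ k
  let t : ℕ → ℝ := fun k => ε * d k / (4 * P.card)
  have hd : ∀ k, 0 < d k := fun k => by positivity
  have ht : ∀ k, 0 ≤ t k := fun k => by have := hd k; positivity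
  have hdiam : ∀ k C, ∀ a ∈ clusterSet P (t k) C, ∀ b ∈ clusterSet P (t k) C,
      dist a b ≤ ε * d k / 4 := by
    intro k C a ha b hb
    refine (dist_le_of_mem_clusterSet (ht k) ha hb).trans_eq ?_
    simp only [t]
    field_simp
  have hdisj : ∀ k C, Disjoint (clusterSet P (t k) C)
      (ringSet P ε (d k) (clusterSet P (t k) C)) := by
    intro k C
    refine Finset.disjoint_left.2 fun y hyA hyB => ?_
    obtain ⟨-, a, ha, hle, -⟩ := mem_ringSet.1 hyB
    have h1 := hdiam k C a ha y hyA
    have := hd k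
    nlinarith
  have : ∀ s, Fintype (thresholdGraph P s).ConnectedComponent := fun s => Fintype.ofFinite _
  let S : (k : ℕ) → Finset (thresholdGraph P (t k)).ConnectedComponent := fun k =>
    Finset.univ.filter fun C => (ringSet P ε (d k) (clusterSet P (t k) C)).Nonempty
  let c : ℕ → ℕ := fun k => Fintype.card (thresholdGraph P (t k)).ConnectedComponent
  have htmono : ∀ k, t k ≤ t (k + K) := by
    intro k
    simp only [t, d]
    gcongr
    · exact h1ε.le
    · omega
  have hreach : ∀ k, (1 + ε) * d k ≤ t (k + K) := by
    intro k
    simp only [t]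
    rw [le_div_iff₀ (by positivity)]
    have e : ε * d (k + K) = d k * (ε * (1 + ε) ^ K) := by
      simp only [d, pow_add]
      ring
    rw [e]
    have := mul_le_mul_of_nonneg_left hK (hd k).le
    linarith
  have hstep : ∀ k, (S k).card + 2 * c (k + K) ≤ 2 * c k := by
    intro k
    refine card_merged_add_le (SimpleGraph.ConnectedComponent.map
      (SimpleGraph.Hom.ofLE (thresholdGraph_mono (htmono k)))) ?_ (S k) ?_
    · intro C
      induction C using SimpleGraph.ConnectedComponent.ind with
      | h v => exact ⟨(thresholdGraph P (t k)).connectedComponentMk v, rfl⟩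
    · intro C hC
      exact exists_ne_map_eq (htmono k) (hreach k) (hdisj k C) (Finset.mem_filter.1 hC).2
  have hc : ∀ k, c k ≤ P.card := by
    intro k
    have := Fintype.card_le_of_surjective (thresholdGraph P (t k)).connectedComponentMk
      Quot.mk_surjective
    simpa using this
  let W : Finset (Finset X × Finset X) := (Finset.range N).biUnion fun k =>
    (S k).image fun C => (clusterSet P (t k) C, ringSet P ε (d k) (clusterSet P (t k) C))
  have hW : ∀ pr ∈ W, ∃ k C, (ringSet P ε (d k) (clusterSet P (t k) C)).Nonempty ∧
      pr = (clusterSet P (t k) C, ringSet P ε (d k) (clusterSet P (t k) C)) := by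
    intro pr hpr
    obtain ⟨k, -, h⟩ := Finset.mem_biUnion.1 hpr
    obtain ⟨C, hC, rfl⟩ := Finset.mem_image.1 h
    exact ⟨k, C, (Finset.mem_filter.1 hC).2, rfl⟩
  refine ⟨W, ⟨?_, ?_⟩, ?_, ?_⟩
  · intro pr hpr
    obtain ⟨k, C, hne, rfl⟩ := hW pr hpr
    exact ⟨fun x hx => (mem_clusterSet.1 hx).1, fun x hx => (mem_ringSet.1 hx).1,
      clusterSet_nonempty C, hne, hdisj k C⟩
  · intro x hx y hy hxy
    have hmd := hmin x hx y hy hxy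
    obtain ⟨k, hk1, hk2⟩ := exists_nat_pow_near ((one_le_div hm).2 hmd) h1ε
    rw [le_div_iff₀ hm] at hk1
    rw [div_lt_iff₀ hm] at hk2
    have hkN : k < N := by
      have h1 : (1 + ε) ^ k < (1 + ε) ^ N := by
        refine lt_of_le_of_lt ?_ hN
        rw [le_div_iff₀ hm]
        exact hk1.trans (hM x hx y hy)
      exact (pow_lt_pow_iff_right₀ h1ε).1 h1
    let C := (thresholdGraph P (t k)).connectedComponentMk ⟨x, hx⟩
    have hxC : x ∈ clusterSet P (t k) C := mem_clusterSet.2 ⟨hx, rfl⟩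
    have hyB : y ∈ ringSet P ε (d k) (clusterSet P (t k) C) := by
      refine mem_ringSet.2 ⟨hy, x, hxC, ?_, ?_⟩
      · simp only [d]
        linarith
      · simp only [d]
        rw [pow_succ] at hk2
        linarith
    refine ⟨_, Finset.mem_biUnion.2 ⟨k, Finset.mem_range.2 hkN, Finset.mem_image.2
      ⟨C, Finset.mem_filter.2 ⟨Finset.mem_univ _, ⟨y, hyB⟩⟩, rfl⟩⟩, Or.inl ⟨hxC, hyB⟩⟩
  · intro pr hpr
    obtain ⟨k, C, hne, rfl⟩ := hW pr hpr
    exact stable_and_semiSeparated hε hε' (hd k) (clusterSet_nonempty C) hne (hdiam k C)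
      fun b hb => (mem_ringSet.1 hb).2
  · have h1 : W.card ≤ ∑ k ∈ Finset.range N, (S k).card :=
      Finset.card_biUnion_le.trans (Finset.sum_le_sum fun k _ => Finset.card_image_le)
    have h2 := sum_add_le_of_step (fun k => (S k).card) c K hstep N
    have h3 : ∑ i ∈ Finset.range K, c i ≤ K * P.card := by
      simpa using Finset.sum_le_card_nsmul (Finset.range K) c P.card fun i _ => hc i
    omega

/-- The pairs of singletons. -/
lemma exists_decomposition_singletons (P : Finset X) {ε : ℝ} (hε : 0 < ε) :
    ∃ W : Finset (Finset X × Finset X), PairDecomp P W ∧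
      (∀ pr ∈ W, IsStable ε pr.1 pr.2 ∧ IsSemiSeparated ε pr.1 pr.2) ∧
      W.card ≤ P.card * P.card := by
  classical
  refine ⟨P.offDiag.image fun p => ({p.1}, {p.2}), ⟨?_, ?_⟩, ?_, ?_⟩
  · intro pr hpr
    obtain ⟨⟨x, y⟩, hp, rfl⟩ := Finset.mem_image.1 hpr
    obtain ⟨hx, hy, hxy⟩ := Finset.mem_offDiag.1 hp
    simpa using ⟨hx, hy, hxy⟩
  · intro x hx y hy hxy
    exact ⟨({x}, {y}), Finset.mem_image.2 ⟨(x, y), Finset.mem_offDiag.2 ⟨hx, hy, hxy⟩, rfl⟩,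
      Or.inl (by simp)⟩
  · intro pr hpr
    obtain ⟨⟨x, y⟩, -, rfl⟩ := Finset.mem_image.1 hpr
    exact stable_and_semiSeparated_singleton hε x y
  · refine Finset.card_image_le.trans ?_
    rw [Finset.offDiag_card]
    omega

end Decomposition

/-! ### The size bound -/

lemma half_le_log {n : ℕ} (hn : 2 ≤ n) : 1 / 2 ≤ Real.log n := by
  have h1 : Real.log 2 ≤ Real.log n := Real.log_le_log (by norm_num) (by exact_mod_cast hn)
  have := Real.log_two_gt_d9
  linarith

/-- For `ε ≥ 1 / n` the argument `4 * n / ε` of the logarithm is at most `n ^ 4`, and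
`log (1 + ε) ≥ 2 * ε / 3`. -/
lemma exists_scale_shift {n : ℕ} (hn : 2 ≤ n) {ε : ℝ} (hε : 0 < ε) (hε' : ε < 1 / 2)
    (hnε : 1 ≤ ε * n) :
    ∃ K : ℕ, (1 + ε) * (4 * n) ≤ ε * (1 + ε) ^ K ∧ (K : ℝ) ≤ 8 * (Real.log n / ε) := by
  have hn2 : (2 : ℝ) ≤ n := by exact_mod_cast hn
  have hlog := half_le_log hn
  have hL : 2 * ε / 3 ≤ Real.log (1 + ε) := by
    have h1 := Real.one_sub_inv_le_log_of_pos (show 0 < 1 + ε by linarith)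
    refine le_trans ?_ h1
    have h2 : 1 - (1 + ε)⁻¹ = ε / (1 + ε) := by
      field_simp
      ring
    rw [h2, div_le_div_iff₀ (by norm_num) (by linarith)]
    nlinarith
  have hM := Nat.le_ceil (6 * (Real.log n / ε))
  have hM' := Nat.ceil_lt_add_one (show 0 ≤ 6 * (Real.log n / ε) by positivity)
  set M := ⌈6 * (Real.log n / ε)⌉₊
  refine ⟨M + 1, ?_, ?_⟩
  · have h1 : (n : ℝ) ^ 4 ≤ (1 + ε) ^ M := by
      rw [← Real.log_le_log_iff (by positivity) (by positivity), Real.log_pow, Real.log_pow]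
      have h2 : 6 * (Real.log n / ε) * (2 * ε / 3) ≤ M * Real.log (1 + ε) := by gcongr
      have h3 : 6 * (Real.log n / ε) * (2 * ε / 3) = 4 * Real.log n := by
        field_simp
        norm_num
      push_cast
      linarith
    have h4 : (4 : ℝ) * n ≤ ε * (n : ℝ) ^ 4 := by
      have h5 : (4 : ℝ) ≤ (n : ℝ) ^ 2 := by nlinarith
      calc (4 : ℝ) * n ≤ (n : ℝ) ^ 2 * n := by gcongr
        _ = 1 * (n : ℝ) ^ 3 := by ring
        _ ≤ (ε * n) * (n : ℝ) ^ 3 := by gcongr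
        _ = ε * (n : ℝ) ^ 4 := by ring
    calc (1 + ε) * (4 * n) ≤ (1 + ε) * (ε * (n : ℝ) ^ 4) := by gcongr
      _ ≤ (1 + ε) * (ε * (1 + ε) ^ M) := by gcongr
      _ = ε * (1 + ε) ^ (M + 1) := by ring
  · have h1 : 1 ≤ Real.log n / ε := by
      rw [le_div_iff₀ hε]
      linarith
    push_cast
    linarith

theorem stmt1 :
    ∃ c : ℝ, 0 < c ∧
      ∀ (X : Type*) [MetricSpace X] (P : Finset X) (n : ℕ) (ε : ℝ),
        P.card = n → 2 ≤ n → 0 < ε → ε < 1 / 2 →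
        ∃ W : Finset (Finset X × Finset X),
          PairDecomp P W ∧
          (∀ pr ∈ W, IsStable ε pr.1 pr.2 ∧ IsSemiSeparated ε pr.1 pr.2) ∧
          (W.card : ℝ) ≤ c * ((n : ℝ) / ε) * Real.log n := by
  refine ⟨16, by norm_num, ?_⟩
  intro X _ P n ε hPn hn hε hε'
  subst hPn
  have hlog := half_le_log hn
  have hn0 : (0 : ℝ) < P.card := by exact_mod_cast (by omega : 0 < P.card)
  rcases le_or_gt 1 (ε * P.card) with h | h
  · obtain ⟨K, hK, hK'⟩ := exists_scale_shift hn hε hε' h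
    obtain ⟨W, h1, h2, h3⟩ :=
      exists_decomposition (Finset.card_pos.1 (by omega)) hε hε' K hK
    refine ⟨W, h1, h2, ?_⟩
    calc (W.card : ℝ) ≤ 2 * (K * P.card) := by exact_mod_cast h3
      _ ≤ 2 * (8 * (Real.log P.card / ε) * P.card) := by gcongr
      _ = 16 * ((P.card : ℝ) / ε) * Real.log P.card := by ring
  · obtain ⟨W, h1, h2, h3⟩ := exists_decomposition_singletons P hε
    refine ⟨W, h1, h2, ?_⟩
    have h4 : (P.card : ℝ) ≤ 1 / ε := by
      rw [le_div_iff₀ hε]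
      linarith
    calc (W.card : ℝ) ≤ P.card * P.card := by exact_mod_cast h3
      _ ≤ P.card * (1 / ε) := by gcongr
      _ = 2 * ((P.card : ℝ) / ε) * (1 / 2) := by ring
      _ ≤ 16 * ((P.card : ℝ) / ε) * Real.log P.card := by
        gcongr
        norm_num
end

section
/- Let (X, dist) be a metric space, let P ⊆ X be finite with |P| = n ≥ 2, and let ε > 0 satisfy ε · diam(P) < cp(P). Then every (1/ε)-well-separated pair {A,B} of disjoint nonempty subsets of P has |A| = |B| = 1; consequently, every (1/ε)-WSPD of P has size at least n(n−1)/2. -/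
/-- The closest-pair distance of a finite set with at least two points. -/
noncomputable def closestPair {X : Type*} [MetricSpace X] (P : Finset X) : ℝ :=
  sInf {r : ℝ | ∃ x ∈ P, ∃ y ∈ P, x ≠ y ∧ r = dist x y}

/-- A pair `{A, B}` is `(1/ε)`-well-separated if `max(diam A, diam B) ≤ ε · d(A,B)`. -/
def IsWellSeparated {X : Type*} [MetricSpace X] (ε : ℝ) (A B : Finset X) : Prop :=
  max (fdiam A) (fdiam B) ≤ ε * dmin A B

theorem dist_le_fdiam {X : Type*} [MetricSpace X] {A : Finset X} {x y : X}
    (hx : x ∈ A) (hy : y ∈ A) : dist x y ≤ fdiam A := by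
  -- The set of distances is finite, so its `sSup` is not a junk value.
  have hfin : {r : ℝ | ∃ x ∈ A, ∃ y ∈ A, r = dist x y}.Finite := by
    refine ((A ×ˢ A).finite_toSet.image fun p => dist p.1 p.2).subset ?_
    rintro r ⟨u, hu, v, hv, rfl⟩
    exact ⟨(u, v), by simp [hu, hv], rfl⟩
  exact le_csSup hfin.bddAbove ⟨x, hx, y, hy, rfl⟩

theorem dmin_le_dist {X : Type*} [MetricSpace X] {A B : Finset X} {a b : X}
    (ha : a ∈ A) (hb : b ∈ B) : dmin A B ≤ dist a b := by
  refine csInf_le ⟨0, ?_⟩ ⟨a, ha, b, hb, rfl⟩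
  rintro r ⟨u, _, v, _, rfl⟩
  exact dist_nonneg

theorem closestPair_le_dist {X : Type*} [MetricSpace X] {P : Finset X} {x y : X}
    (hx : x ∈ P) (hy : y ∈ P) (hxy : x ≠ y) : closestPair P ≤ dist x y := by
  refine csInf_le ⟨0, ?_⟩ ⟨x, hx, y, hy, hxy, rfl⟩
  rintro r ⟨u, _, v, _, _, rfl⟩
  exact dist_nonneg

/-- A nonempty subset of `P` whose diameter is at most `ε · diam P < cp(P)` is a singleton, because
two distinct points of `P` are at distance at least `cp(P)`. -/
theorem card_eq_one_of_fdiam_le {X : Type*} [MetricSpace X] {P A : Finset X} {ε : ℝ}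
    (hsmall : ε * fdiam P < closestPair P) (hA : A ⊆ P) (hne : A.Nonempty)
    (h : fdiam A ≤ ε * fdiam P) : A.card = 1 := by
  refine le_antisymm (Finset.card_le_one.2 fun x hx y hy => ?_) hne.card_pos
  by_contra hxy
  linarith [dist_le_fdiam hx hy, closestPair_le_dist (hA hx) (hA hy) hxy]

theorem stmt9 {X : Type*} [MetricSpace X] (P : Finset X) (n : ℕ)
    (hcard : P.card = n) (hn : 2 ≤ n) (ε : ℝ) (hε : 0 < ε)
    (hsmall : ε * fdiam P < closestPair P) :
    (∀ A B : Finset X, A ⊆ P → B ⊆ P → A.Nonempty → B.Nonempty → Disjoint A B →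
      IsWellSeparated ε A B → A.card = 1 ∧ B.card = 1) ∧
    (∀ W : Finset (Finset X × Finset X), PairDecomp P W →
      (∀ pr ∈ W, IsWellSeparated ε pr.1 pr.2) → n * (n - 1) / 2 ≤ W.card) := by
  have key : ∀ A B : Finset X, A ⊆ P → B ⊆ P → A.Nonempty → B.Nonempty → Disjoint A B →
      IsWellSeparated ε A B → A.card = 1 ∧ B.card = 1 := by
    intro A B hA hB hAne hBne _ hws
    obtain ⟨a, ha⟩ := hAne
    obtain ⟨b, hb⟩ := hBne
    have hd : ε * dmin A B ≤ ε * fdiam P :=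
      mul_le_mul_of_nonneg_left
        ((dmin_le_dist ha hb).trans (dist_le_fdiam (hA ha) (hB hb))) hε.le
    have hmax := max_le_iff.1 (hws.trans hd)
    exact ⟨card_eq_one_of_fdiam_le hsmall hA ⟨a, ha⟩ hmax.1,
      card_eq_one_of_fdiam_le hsmall hB ⟨b, hb⟩ hmax.2⟩
  refine ⟨key, fun W hW hws => ?_⟩
  classical
  have hsub : P.powersetCard 2 ⊆ W.image fun pr => pr.1 ∪ pr.2 := by
    intro S hS
    obtain ⟨hSP, hS2⟩ := Finset.mem_powersetCard.1 hS
    obtain ⟨x, y, hxy, rfl⟩ := Finset.card_eq_two.1 hS2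
    obtain ⟨pr, hpr, hmem⟩ := hW.2 x (hSP (by simp)) y (hSP (by simp)) hxy
    obtain ⟨h1, h2, h3, h4, h5⟩ := hW.1 pr hpr
    obtain ⟨hc1, hc2⟩ := key pr.1 pr.2 h1 h2 h3 h4 h5 (hws pr hpr)
    obtain ⟨u, hu⟩ := Finset.card_eq_one.1 hc1
    obtain ⟨v, hv⟩ := Finset.card_eq_one.1 hc2
    refine Finset.mem_image.2 ⟨pr, hpr, ?_⟩
    rw [hu, hv] at hmem ⊢
    simp only [Finset.mem_singleton] at hmem
    rcases hmem with ⟨rfl, rfl⟩ | ⟨rfl, rfl⟩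
    · rfl
    · exact Finset.union_comm _ _
  have hle := (Finset.card_le_card hsub).trans Finset.card_image_le
  rwa [Finset.card_powersetCard, hcard, Nat.choose_two_right] at hle
end
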